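/- arXiv:1505.07068 — 5 statements merged into one kernel-verified Lean document; each statement's English description precedes it below -/
import Mathlib

section
/- Let C ⊆ k be fields of characteristic zero and let 𝔥 be a finite-dimensional Lie algebra over C whose adjoint module is semisimple, i.e. every ideal of 𝔥 admits a complementary ideal (equivalently, 𝔥 is a direct sum of simple ideals together with an abelian part decomposing into lines — the Lie-algebra condition implied by 𝔥 being the Lie algebra of a reductive algebraic group over C). Let 𝔤 be a C-Lie subalgebra of the base-changed Lie algebra k ⊗_C 𝔥 (with bracket ⁅a⊗ξ, b⊗η⁆ = ab ⊗ [ξ,η]) containing all elements 1 ⊗ ξ for ξ ∈ 𝔥. Let W be a finite-dimensional k-vector space, ρ : 𝔤 → End_k(W) a C-linear map satisfying ρ(⁅m₁,m₂⁆) = ρ(m₁)∘ρ(m₂) − ρ(m₂)∘ρ(m₁), and let V ⊆ W be a k-subspace with dim_k(W/V) = 1 such that ρ(m)(W) ⊆ V for every m ∈ 𝔤 (so V is a 𝔤-submodule and W/V carries the trivial action). Assume: (1) there exists w₀ ∈ W ∖ V with ρ(1⊗ξ)(w₀) = 0 for all ξ ∈ 𝔥; and (2) there is no nonzero C-linear map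 μ : 𝔥 → V with μ([ξ,η]) = ρ(1⊗ξ)(μ(η)) for all ξ, η ∈ 𝔥 (equivalently, there is no nonzero k-linear (k⊗_C 𝔥)-equivariant map k⊗_C 𝔥 → V). Then there exists w ∈ W ∖ V with ρ(m)(w) = 0 for every m ∈ 𝔤. -/
open scoped TensorProduct

/-!
An `𝔥`-fixed vector `w₀` gives the orbit map `𝔤 → V`, `m ↦ ρ m w₀`, which is `𝔥`-equivariant. As an
`𝔥`-module, `k ⊗ 𝔥` is the sum of the images `a ⊗ 𝔥` of the adjoint module, so it is semisimple and
retracts equivariantly onto `𝔤`. Composed with this retraction, the orbit map restricts on each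
`a ⊗ 𝔥` to an equivariant map `𝔥 → V`, which vanishes by assumption. Hence the orbit map is zero:
`w₀` itself is fixed by `𝔤`.
-/

section LieSubmodule

variable {R L M M' : Type*} [CommRing R] [LieRing L]
  [AddCommGroup M] [Module R M] [LieRingModule L M]
  [AddCommGroup M'] [Module R M'] [LieRingModule L M']

theorem isAtom_lieSubmodule_map (f : M →ₗ⁅R,L⁆ M') {N : LieSubmodule R L M} (hN : IsAtom N)
    (hf : N.map f ≠ ⊥) : IsAtom (N.map f) := by
  refine ⟨hf, fun P hP ↦ eq_bot_iff.mpr fun y hy ↦ ?_⟩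
  have hlt : N ⊓ P.comap f < N := inf_le_left.lt_of_ne fun h ↦
    hP.not_ge (LieSubmodule.map_le_iff_le_comap.mpr (inf_eq_left.mp h))
  obtain ⟨x, hx, rfl⟩ := (LieSubmodule.mem_map _).mp (hP.le hy)
  have hx_bot : x ∈ (⊥ : LieSubmodule R L M) := hN.2 _ hlt ▸ ⟨hx, hy⟩
  rw [(LieSubmodule.mem_bot x).mp hx_bot, map_zero]
  exact zero_mem _

theorem exists_lieModuleHom_retraction [ComplementedLattice (LieSubmodule R L M)]
    (N : LieSubmodule R L M) : ∃ p : M →ₗ⁅R,L⁆ N, ∀ n : N, p n = n := by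
  obtain ⟨N', h⟩ := exists_isCompl N
  have hc := LieSubmodule.isCompl_toSubmodule.mpr h
  let p : M →ₗ[R] N := N.toSubmodule.projectionOnto N'.toSubmodule hc
  have hN (n : N) : p n = n := Submodule.projectionOnto_apply_left hc n
  have hN' (n : N') : p n = 0 := Submodule.projectionOnto_apply_right hc n
  refine ⟨{ p with map_lie' := fun {x m} ↦ ?_ }, hN⟩
  obtain ⟨n, n', rfl⟩ : ∃ (n : N) (n' : N'), (n + n' : M) = m := by
    obtain ⟨n, hn, n', hn', h⟩ :=
      Submodule.mem_sup.mp (hc.sup_eq_top ▸ Submodule.mem_top (x := m))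
    exact ⟨⟨n, hn⟩, ⟨n', hn'⟩, h⟩
  change p ⁅x, _⁆ = ⁅x, p _⁆
  rw [lie_add, ← LieSubmodule.coe_bracket, ← LieSubmodule.coe_bracket]
  simp only [map_add, hN, hN', add_zero]

theorem complementedLattice_lieSubmodule_of_iSup_range_eq_top
    [ComplementedLattice (LieSubmodule R L M)] {ι : Sort*} (f : ι → M →ₗ⁅R,L⁆ M')
    (hf : ⨆ i, (f i).range = ⊤) : ComplementedLattice (LieSubmodule R L M') := by
  refine complementedLattice_of_sSup_atoms_eq_top (eq_top_iff.mpr (hf ▸ iSup_le fun i ↦ ?_))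
  rw [← LieModuleHom.map_top, ← sSup_atoms_eq_top, (LieSubmodule.gc_map_comap (f i)).l_sSup]
  refine iSup₂_le fun N hN ↦ ?_
  obtain h | h := eq_or_ne (N.map (f i)) ⊥
  · exact h ▸ bot_le
  · exact le_sSup (isAtom_lieSubmodule_map (f i) hN h)

end LieSubmodule

section BaseChange

variable {R A L M : Type*} [CommRing R] [CommRing A] [Algebra R A] [LieRing L] [LieAlgebra R L]
  [AddCommGroup M] [Module R M] [LieRingModule L M] [LieModule R L M]

variable (R A L) in
/-- The canonical embedding `x ↦ 1 ⊗ x` of a Lie algebra into its base change. -/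
def lieIncludeRight : L →ₗ⁅R⁆ A ⊗[R] L :=
  { TensorProduct.mk R A L 1 with
    map_lie' := by simp }

/-- The base change of an `L`-module is again an `L`-module, with `L` acting through
`lieIncludeRight`. -/
local instance lieRingModuleBaseChange : LieRingModule L (A ⊗[R] M) :=
  LieRingModule.compLieHom _ (lieIncludeRight R A L)

theorem lie_baseChange_tmul (x : L) (a : A) (m : M) : ⁅x, a ⊗ₜ[R] m⁆ = a ⊗ₜ ⁅x, m⁆ := by
  change ⁅(1 : A) ⊗ₜ[R] x, a ⊗ₜ[R] m⁆ = _
  rw [LieAlgebra.ExtendScalars.bracket_tmul, one_mul]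

variable (R L M) in
/-- The morphism `m ↦ a ⊗ m` from an `L`-module to its base change; as `a` varies, the images span
the base change. -/
def tmulLieModuleHom (a : A) : M →ₗ⁅R,L⁆ A ⊗[R] M :=
  { TensorProduct.mk R A M a with
    map_lie' := (lie_baseChange_tmul _ a _).symm }

theorem iSup_range_tmulLieModuleHom : ⨆ a : A, (tmulLieModuleHom R L M a).range = ⊤ := by
  rw [← LieSubmodule.toSubmodule_eq_top, eq_top_iff, ← TensorProduct.span_tmul_eq_top,
    Submodule.span_le]
  rintro _ ⟨a, m, rfl⟩
  exact LieSubmodule.mem_iSup_of_mem a ⟨m, rfl⟩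

theorem complementedLattice_lieSubmodule_baseChange [ComplementedLattice (LieSubmodule R L M)] :
    ComplementedLattice (LieSubmodule R L (A ⊗[R] M)) :=
  complementedLattice_lieSubmodule_of_iSup_range_eq_top _ iSup_range_tmulLieModuleHom

theorem lieModuleHom_eq_zero_of_lieSubmodule_baseChange
    [ComplementedLattice (LieSubmodule R L M)] {V : Type*} [AddCommGroup V] [Module R V]
    [LieRingModule L V] (hV : ∀ μ : M →ₗ⁅R,L⁆ V, μ = 0) {N : LieSubmodule R L (A ⊗[R] M)}
    (φ : N →ₗ⁅R,L⁆ V) : φ = 0 := by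
  have := complementedLattice_lieSubmodule_baseChange (R := R) (A := A) (L := L) (M := M)
  obtain ⟨p, hp⟩ := exists_lieModuleHom_retraction N
  have hφp : (φ.comp p : A ⊗[R] M →ₗ[R] V) = 0 := TensorProduct.ext' fun a m ↦
    LieModuleHom.congr_fun (hV ((φ.comp p).comp (tmulLieModuleHom R L M a))) m
  ext n
  simpa [hp] using LinearMap.congr_fun hφp n

attribute [local instance] LieRing.ofAssociativeRing

theorem stmt1_general [ComplementedLattice (LieIdeal R L)] (G : LieSubalgebra R (A ⊗[R] L))
    (hG : ∀ x : L, (1 : A) ⊗ₜ[R] x ∈ G) {W : Type*} [AddCommGroup W] [Module R W]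
    (ρ : G →ₗ⁅R⁆ Module.End R W) (V : Submodule R W) (hρV : ∀ g w, ρ g w ∈ V)
    (hV : ∀ μ : L →ₗ[R] W, (∀ x, μ x ∈ V) →
      (∀ x y, μ ⁅x, y⁆ = ρ ⟨1 ⊗ₜ x, hG x⟩ (μ y)) → μ = 0)
    {w : W} (hw : ∀ x, ρ ⟨1 ⊗ₜ x, hG x⟩ w = 0) (g : G) : ρ g w = 0 := by
  let ι : L →ₗ⁅R⁆ G :=
    { (lieIncludeRight R A L).toLinearMap.codRestrict G.toSubmodule hG with
      map_lie' := fun {x y} ↦ Subtype.ext ((lieIncludeRight R A L).map_lie x y) }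
  let : LieRingModule L W := LieRingModule.compLieHom W (ρ.comp ι)
  let N : LieSubmodule R L (A ⊗[R] L) :=
    { G.toSubmodule with lie_mem := fun {x _} h ↦ G.lie_mem (hG x) h }
  let V' : LieSubmodule R L W := { V with lie_mem := fun _ ↦ hρV _ _ }
  let φ : N →ₗ⁅R,L⁆ W :=
    { LinearMap.applyₗ w ∘ₗ ρ.toLinearMap with
      map_lie' := fun {x n} ↦ by
        have hιw : ρ (ι x) w = 0 := hw x
        change ρ ⁅ι x, n⁆ w = ρ (ι x) (ρ n w)
        rw [LieHom.map_lie, LieRing.of_associative_ring_bracket, LinearMap.sub_apply,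
          Module.End.mul_apply, Module.End.mul_apply, hιw, map_zero, sub_zero] }
  have hV' (μ : L →ₗ⁅R,L⁆ V') : μ = 0 := by
    have hμ := hV (V'.incl.comp μ) (fun x ↦ (μ x).2) fun x y ↦ congrArg Subtype.val (μ.map_lie x y)
    ext x
    exact LinearMap.congr_fun hμ x
  have hφ := lieModuleHom_eq_zero_of_lieSubmodule_baseChange hV' (φ.codRestrict V' fun n ↦ hρV n w)
  exact congrArg Subtype.val (LieModuleHom.congr_fun hφ g)

end BaseChange

/-- Lemma 4.1 of the paper. `𝔥` is a finite-dimensional Lie algebra over `C` with semisimple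
adjoint module, `𝔤` is a `C`-Lie subalgebra of `k ⊗[C] 𝔥` containing `1 ⊗ ξ` for all `ξ ∈ 𝔥`,
and `0 → V → W → 𝟙 → 0` is an exact sequence of `𝔤`-modules over `k` which splits over `𝔥`
and such that `V` contains no nonzero quotient of the adjoint module. Then the sequence
splits: there is a `𝔤`-fixed vector outside `V`. -/
theorem stmt1 {C k : Type*} [Field C] [Field k] [Algebra C k] [CharZero C] [CharZero k]
    {𝔥 : Type*} [LieRing 𝔥] [LieAlgebra C 𝔥] [FiniteDimensional C 𝔥]
    (hss : ∀ I : LieIdeal C 𝔥, ∃ J : LieIdeal C 𝔥, IsCompl I J)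
    (𝔤 : Submodule C (k ⊗[C] 𝔥))
    (hcl : ∀ x y : k ⊗[C] 𝔥, x ∈ 𝔤 → y ∈ 𝔤 → ⁅x, y⁆ ∈ 𝔤)
    (h1 : ∀ ξ : 𝔥, (1 : k) ⊗ₜ[C] ξ ∈ 𝔤)
    {W : Type*} [AddCommGroup W] [Module k W] [Module C W] [IsScalarTower C k W]
    [FiniteDimensional k W]
    (ρ : 𝔤 →ₗ[C] (W →ₗ[k] W))
    (hbracket : ∀ m₁ m₂ : 𝔤,
      ρ ⟨⁅(m₁ : k ⊗[C] 𝔥), (m₂ : k ⊗[C] 𝔥)⁆, hcl _ _ m₁.2 m₂.2⟩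
        = ρ m₁ ∘ₗ ρ m₂ - ρ m₂ ∘ₗ ρ m₁)
    (V : Submodule k W)
    (hcodim : Module.finrank k (W ⧸ V) = 1)
    (hmapsV : ∀ (m : 𝔤) (w : W), ρ m w ∈ V)
    (hsplit𝔥 : ∃ w₀ : W, w₀ ∉ V ∧ ∀ ξ : 𝔥, ρ ⟨(1 : k) ⊗ₜ[C] ξ, h1 ξ⟩ w₀ = 0)
    (hnoadj : ∀ μ : 𝔥 →ₗ[C] W, (∀ ξ : 𝔥, μ ξ ∈ V) →
      (∀ ξ η : 𝔥, μ ⁅ξ, η⁆ = ρ ⟨(1 : k) ⊗ₜ[C] ξ, h1 ξ⟩ (μ η)) → μ = 0) :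
    ∃ w : W, w ∉ V ∧ ∀ m : 𝔤, ρ m w = 0 := by
  obtain ⟨w₀, hw₀, hfix⟩ := hsplit𝔥
  have : ComplementedLattice (LieIdeal C 𝔥) := ⟨hss⟩
  let : LieRing (Module.End C W) := LieRing.ofAssociativeRing
  exact ⟨w₀, hw₀, stmt1_general { 𝔤 with lie_mem' := hcl _ _ } h1
    { LinearMap.restrictScalarsₗ C k W W C ∘ₗ ρ with
      map_lie' := congrArg (LinearMap.restrictScalars C) (hbracket _ _) }
    (V.restrictScalars C) hmapsV hnoadj hfix⟩
end

section
/- Let k be a field, let H be a group acting k-linearly and faithfully on a k-vector space U (i.e. the homomorphism H → GL(U) is injective), and let V ⊆ U be an H-invariant k-subspace such that H acts trivially on the quotient U/V and such that V contains no nonzero H-fixed vector. Then every subgroup R of H that is contained in the center of H and acts trivially on V is the trivial subgroup. -/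
/-!
A central element `g` makes `a ↦ g • a - a` an equivariant map into `V`. When `g` fixes `V`
pointwise, `(h - 1)(g - 1) = (g - 1)(h - 1)` kills every `a`, because `h • a - a` lies in `V`;
so the values `g • a - a` are fixed vectors of `V`, hence zero, and faithfulness gives `g = 1`.
-/

section DistribMulAction

variable {M A : Type*} [Monoid M] [AddCommGroup A] [DistribMulAction M A]

theorem smul_sub_self_sub_comm_of_commute {g h : M} (hgh : Commute g h) (a : A) :
    h • (g • a - a) - (g • a - a) = g • (h • a - a) - (h • a - a) := by
  have hsmul : h • g • a = g • h • a := by rw [smul_smul, smul_smul, hgh.eq]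
  rw [smul_sub, smul_sub, hsmul]
  abel

theorem smul_eq_self_of_forall_commute {V : AddSubgroup A}
    (htrivQ : ∀ (h : M) (a : A), h • a - a ∈ V)
    (hnofix : ∀ v ∈ V, (∀ h : M, h • v = v) → v = 0)
    {g : M} (hcomm : ∀ h : M, Commute g h) (htrivV : ∀ v ∈ V, g • v = v) (a : A) :
    g • a = a := by
  have hfixed (h : M) : h • (g • a - a) = g • a - a := by
    rw [← sub_eq_zero, smul_sub_self_sub_comm_of_commute (hcomm h), sub_eq_zero]
    exact htrivV _ (htrivQ h a)
  exact sub_eq_zero.mp (hnofix _ (htrivQ g a) hfixed)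

end DistribMulAction

theorem stmt9_general {H A : Type*} [Group H] [AddCommGroup A] [DistribMulAction H A]
    [FaithfulSMul H A] (V : AddSubgroup A)
    (htrivQ : ∀ (h : H) (a : A), h • a - a ∈ V)
    (hnofix : ∀ v ∈ V, (∀ h : H, h • v = v) → v = 0)
    (R : Subgroup H) (hcentral : R ≤ Subgroup.center H)
    (htrivV : ∀ g ∈ R, ∀ v ∈ V, g • v = v) :
    R = ⊥ := by
  refine (Subgroup.eq_bot_iff_forall R).mpr fun g hg => eq_of_smul_eq_smul fun a : A => ?_
  have hcomm (h : H) : Commute g h := (Subgroup.mem_center_iff.mp (hcentral hg) h).symm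
  rw [one_smul]
  exact smul_eq_self_of_forall_commute htrivQ hnofix hcomm (htrivV g hg) a

/-- If a group `H` acts `k`-linearly and faithfully on `U`, `V ⊆ U` is an `H`-invariant
subspace with trivial `H`-action on `U/V` and with no nonzero `H`-fixed vector, then every
central subgroup of `H` acting trivially on `V` is trivial. -/
theorem stmt9 {k : Type*} [Field k] {H : Type*} [Group H]
    {U : Type*} [AddCommGroup U] [Module k U]
    (ρ : H →* (U ≃ₗ[k] U)) (hfaithful : Function.Injective ρ)
    (V : Submodule k U)
    (hinv : ∀ h : H, ∀ v ∈ V, ρ h v ∈ V)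
    (htrivQ : ∀ (h : H) (u : U), ρ h u - u ∈ V)
    (hnofix : ∀ v ∈ V, (∀ h : H, ρ h v = v) → v = 0)
    (R : Subgroup H) (hcentral : R ≤ Subgroup.center H)
    (htrivV : ∀ g ∈ R, ∀ v ∈ V, ρ g v = v) :
    R = ⊥ := by
  let _ : DistribMulAction H U := DistribMulAction.compHom U ρ
  have : FaithfulSMul H U := ⟨fun h => hfaithful (LinearEquiv.ext h)⟩
  exact stmt9_general V.toAddSubgroup htrivQ hnofix R hcentral htrivV
end

section
/- Let K₀/K be a finite Galois extension of fields of characteristic zero with Galois group G = Gal(K₀/K) of order r, and let ∂, δ : K₀ → K₀ be two derivations such that every σ ∈ G commutes with both: σ(∂x) = ∂(σx) and σ(δx) = δ(σx) for all x ∈ K₀. Let n ≥ 1, let A ∈ Matrix n n K₀ be a matrix each of whose entries is fixed by every σ ∈ G (so the entries of A lie in K), and suppose B ∈ Matrix n n K₀ satisfies ∂(B) − δ(A) = A·B − B·A, where derivations are applied entrywise. Set C = (1/r) · Σ_{σ ∈ G} σ(B) (entrywise). Then every entry of C is fixed by every σ ∈ G (hence lies in K), and C satisfies ∂(C) − δ(A)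 = A·C − C·A. -/
open scoped Matrix

/-- The Galois average `C = (1/r) Σ_{σ ∈ Gal(K₀/K)} σ(B)` of a matrix `B` over `K₀`. -/
noncomputable def galAverage (K : Type*) {K₀ : Type*} [Field K] [Field K₀] [Algebra K K₀]
    [FiniteDimensional K K₀] {n : ℕ} (B : Matrix (Fin n) (Fin n) K₀) :
    Matrix (Fin n) (Fin n) K₀ :=
  (Fintype.card (K₀ ≃ₐ[K] K₀) : K₀)⁻¹ • ∑ τ : K₀ ≃ₐ[K] K₀, B.map ⇑τ

section GroupAverage

variable (k G : Type*) {M N : Type*} [DivisionSemiring k] [Group G] [Fintype G]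
  [AddCommMonoid M] [Module k M] [DistribMulAction G M]
  [AddCommMonoid N] [Module k N] [DistribMulAction G N]

/-- The average of the orbit map `g ↦ g • x` of a finite group `G` (the Reynolds operator). The
action of `G` need not be `k`-linear: the scalar ring `k` only serves to divide by `|G|`, and the
value is the junk `0` when `|G| = 0` in `k`. -/
def groupAverage (x : M) : M :=
  (Fintype.card G : k)⁻¹ • ∑ g : G, g • x

variable {G}

theorem map_groupAverage (f : M →+ N) (hf : ∀ (g : G) (x : M), g • f x = f (g • x)) (x : M) :
    f (groupAverage k G x) = groupAverage k G (f x) := by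
  simp only [groupAverage, map_inv_natCast_smul f k k, map_sum, hf]

theorem smul_groupAverage (g : G) (x : M) :
    g • groupAverage k G x = groupAverage k G x :=
  calc g • groupAverage k G x
      = (Fintype.card G : k)⁻¹ • g • ∑ h : G, h • x :=
        map_inv_natCast_smul (DistribSMul.toAddMonoidHom M g) k k _ _
    _ = (Fintype.card G : k)⁻¹ • ∑ h : G, (g * h) • x := by
        simp only [Finset.smul_sum, mul_smul]
    _ = groupAverage k G x :=
        congrArg _ (Equiv.sum_comp (Equiv.mulLeft g) fun h ↦ h • x)

variable {k}

theorem groupAverage_of_smul_eq (hG : (Fintype.card G : k) ≠ 0) {x : M}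
    (hx : ∀ g : G, g • x = x) : groupAverage k G x = x := by
  rw [groupAverage, Finset.sum_congr rfl fun g _ ↦ hx g, Finset.sum_const, Finset.card_univ,
    ← Nat.cast_smul_eq_nsmul k, inv_smul_smul₀ hG]

theorem map_groupAverage_of_map_eq (hG : (Fintype.card G : k) ≠ 0) (f : M →+ N)
    (hf : ∀ (g : G) (x : M), g • f x = f (g • x)) {x : M} {y : N} (hy : ∀ g : G, g • y = y)
    (hxy : f x = y) : f (groupAverage k G x) = y := by
  rw [map_groupAverage k f hf, hxy, groupAverage_of_smul_eq hG hy]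

end GroupAverage

theorem smul_matrix_map {G m n R S : Type*} [SMul G R] [SMul G S] {f : R → S}
    (hf : ∀ (g : G) (x : R), g • f x = f (g • x)) (g : G) (X : Matrix m n R) :
    g • X.map f = (g • X).map f :=
  Matrix.ext fun i j ↦ hf g (X i j)

theorem smul_matrix_mul {G l m n R : Type*} [Fintype m] [Monoid G] [Semiring R]
    [MulSemiringAction G R] (g : G) (X : Matrix l m R) (Y : Matrix m n R) :
    g • (X * Y) = g • X * g • Y := by
  ext i j
  simp only [Matrix.smul_apply, Matrix.mul_apply, Finset.smul_sum, smul_mul']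

section EndConnection

variable {n R : Type*} [Fintype n]

/-- The operator `∇ X = ∂(X) - (A X - X A)` that the linear differential system `∂ Y = A Y` induces
on endomorphisms. Isomonodromy is the inhomogeneous linear equation `∇ B = δ(A)`: a group average of
a solution is again a solution because `∇` is equivariant and `δ(A)` is invariant. -/
def endConnection [NonUnitalNonAssocRing R] (D : R →+ R) (A : Matrix n n R) :
    Matrix n n R →+ Matrix n n R :=
  D.mapMatrix - (AddMonoidHom.mulLeft A - AddMonoidHom.mulRight A)

theorem endConnection_apply [NonUnitalNonAssocRing R] (D : R →+ R) (A X : Matrix n n R) :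
    endConnection D A X = X.map D - (A * X - X * A) :=
  rfl

theorem endConnection_eq_iff [NonUnitalNonAssocRing R] {D : R →+ R} {A X Z : Matrix n n R} :
    endConnection D A X = Z ↔ X.map D - Z = A * X - X * A := by
  rw [endConnection_apply, sub_eq_iff_eq_add, sub_eq_iff_eq_add, add_comm]

theorem smul_endConnection {G : Type*} [Monoid G] [Ring R] [MulSemiringAction G R] {D : R →+ R}
    (hD : ∀ (g : G) (x : R), g • D x = D (g • x)) (g : G) (A X : Matrix n n R) :
    g • endConnection D A X = endConnection D (g • A) (g • X) := by
  simp only [endConnection_apply, smul_sub, smul_matrix_map hD, smul_matrix_mul]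

end EndConnection

theorem stmt10_general {k G R n : Type*} [DivisionSemiring k] [Group G] [Fintype G] [Fintype n]
    [Ring R] [Module k R] [MulSemiringAction G R] (hG : (Fintype.card G : k) ≠ 0)
    (D1 : R →+ R) (D2 : R → R)
    (hD1 : ∀ (g : G) (x : R), g • D1 x = D1 (g • x))
    (hD2 : ∀ (g : G) (x : R), g • D2 x = D2 (g • x))
    (A B : Matrix n n R) (hA : ∀ g : G, g • A = A)
    (hB : B.map D1 - A.map D2 = A * B - B * A) :
    (∀ g : G, g • groupAverage k G B = groupAverage k G B) ∧
    (groupAverage k G B).map D1 - A.map D2 =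
      A * groupAverage k G B - groupAverage k G B * A := by
  have equivariant (g : G) (X : Matrix n n R) :
      g • endConnection D1 A X = endConnection D1 A (g • X) := by
    rw [smul_endConnection hD1, hA]
  have invariant (g : G) : g • A.map D2 = A.map D2 := by
    rw [smul_matrix_map hD2, hA]
  exact ⟨fun g ↦ smul_groupAverage k g B, endConnection_eq_iff.mp <|
    map_groupAverage_of_map_eq hG _ equivariant invariant (endConnection_eq_iff.mpr hB)⟩

/-- Descent of isomonodromy along a finite Galois extension `K₀/K` in characteristic zero:
if the entries of `A` are Galois-invariant, the derivations `∂ = D1` and `δ = D2` commute with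
the Galois action, and `∂(B) − δ(A) = AB − BA` for some matrix `B` over `K₀`, then the Galois
average `C = (1/r) Σ_σ σ(B)` has Galois-invariant entries and satisfies
`∂(C) − δ(A) = AC − CA`. -/
theorem stmt10 {K K₀ : Type*} [Field K] [Field K₀] [Algebra K K₀]
    [FiniteDimensional K K₀] [IsGalois K K₀] [CharZero K₀]
    (D1 D2 : Derivation ℤ K₀ K₀)
    (hD1 : ∀ (σ : K₀ ≃ₐ[K] K₀) (x : K₀), σ (D1 x) = D1 (σ x))
    (hD2 : ∀ (σ : K₀ ≃ₐ[K] K₀) (x : K₀), σ (D2 x) = D2 (σ x))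
    {n : ℕ} (hn : 1 ≤ n)
    (A B : Matrix (Fin n) (Fin n) K₀)
    (hA : ∀ σ : K₀ ≃ₐ[K] K₀, A.map ⇑σ = A)
    (hB : B.map ⇑D1 - A.map ⇑D2 = A * B - B * A) :
    (∀ σ : K₀ ≃ₐ[K] K₀, (galAverage K B).map ⇑σ = galAverage K B) ∧
    (galAverage K B).map ⇑D1 - A.map ⇑D2 = A * galAverage K B - galAverage K B * A :=
  stmt10_general (k := K₀) (Nat.cast_ne_zero.mpr Fintype.card_ne_zero) (D1 : K₀ →+ K₀) D2
    hD1 hD2 A B hA hB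
end

section
/- Let k be a field of characteristic zero and let α ∈ k be an element such that α² ≠ (m : k)² for every integer m (for example, α transcendental over the prime field). Let a : ℤ → k be a finitely supported function that is not identically zero, and define b : ℤ → k by b(j) = (j² − α²)·a(j) + a(j − 2), where j² denotes the image of the integer j² in k. Then b is nonzero at at least two distinct integers. Consequently, if g = Σ_j a(j) x^j is a nonzero Laurent polynomial over k and L(y) = y'' + (1/x)·y' + (1 − α²/x²)·y, then L(g) (whose coefficient of x^{j−2} is b(j)) is not a monomial; in particular L(g) ≠ x^{μ−1} for any integer μ, so the Lommel equation L(y) = x^{μ−1} has no Laurent-polynomial solution. -/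
/-! For `g = ∑ j, a j x ^ j`, the `(j ^ 2 - α ^ 2) * a j + a (j - 2)` are the coefficients of
`x ^ 2 g'' + x g' + (x ^ 2 - α ^ 2) g`. The lowest term of `g`, of degree `m`, survives multiplied
by the indicial value `m ^ 2 - α ^ 2`, and the highest, of degree `M`, survives in degree `M + 2`;
nothing else contributes in these two degrees, and `m ≤ M < M + 2`. -/

section Shift

variable {Γ R : Type*} [AddGroup Γ] [Preorder Γ] [AddLeftStrictMono Γ] {a : Γ → R} {s : Γ}

theorem mul_add_apply_sub_ne_zero_of_isLeast_support [NonUnitalNonAssocSemiring R]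
    [NoZeroDivisors R] {m : Γ} (hm : IsLeast (Function.support a) m) (hs : 0 < s)
    {c : R} (hc : c ≠ 0) : c * a m + a (m - s) ≠ 0 := by
  have below : a (m - s) = 0 :=
    Function.notMem_support.mp fun h => (sub_lt_self m hs).not_ge (hm.2 h)
  rw [below, add_zero]
  exact mul_ne_zero hc hm.1

theorem mul_add_apply_add_sub_ne_zero_of_isGreatest_support [NonUnitalNonAssocSemiring R]
    {M : Γ} (hM : IsGreatest (Function.support a) M) (hs : 0 < s) (c : R) :
    c * a (M + s) + a (M + s - s) ≠ 0 := by
  have above : a (M + s) = 0 :=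
    Function.notMem_support.mp fun h => (lt_add_of_pos_right M hs).not_ge (hM.2 h)
  rw [above, mul_zero, zero_add, add_sub_cancel_right]
  exact hM.1

end Shift

section ExtremalSupport

variable {ι A : Type*} [LinearOrder ι] [Zero A] {a : ι →₀ A}

theorem exists_isLeast_support (ha : a ≠ 0) : ∃ m, IsLeast (Function.support a) m := by
  rw [a.fun_support_eq]
  exact ⟨_, a.support.isLeast_min' (Finsupp.support_nonempty_iff.mpr ha)⟩

theorem exists_isGreatest_support (ha : a ≠ 0) : ∃ M, IsGreatest (Function.support a) M := by
  rw [a.fun_support_eq]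
  exact ⟨_, a.support.isGreatest_max' (Finsupp.support_nonempty_iff.mpr ha)⟩

end ExtremalSupport

theorem stmt11_general {R : Type*} [Ring R] [NoZeroDivisors R] {α : R} {a : ℤ →₀ R} {m : ℤ}
    (hm : IsLeast (Function.support a) m) (hα : α ^ 2 ≠ (m : R) ^ 2) :
    ∃ j₁ j₂ : ℤ, j₁ ≠ j₂ ∧
      ((j₁ : R) ^ 2 - α ^ 2) * a j₁ + a (j₁ - 2) ≠ 0 ∧
      ((j₂ : R) ^ 2 - α ^ 2) * a j₂ + a (j₂ - 2) ≠ 0 := by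
  have ha : a ≠ 0 := DFunLike.ne_iff.mpr ⟨m, hm.1⟩
  obtain ⟨M, hM⟩ := exists_isGreatest_support ha
  have m_lt : m < M + 2 := (hm.2 hM.1).trans_lt (lt_add_of_pos_right M two_pos)
  exact ⟨m, M + 2, m_lt.ne,
    mul_add_apply_sub_ne_zero_of_isLeast_support hm two_pos (sub_ne_zero.mpr hα.symm),
    mul_add_apply_add_sub_ne_zero_of_isGreatest_support hM two_pos _⟩

/-- If `α² ≠ m²` for every integer `m` and `a : ℤ → k` is a finitely supported nonzero
function, then `b(j) = (j² − α²)·a(j) + a(j − 2)` is nonzero at two distinct integers.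
(This is the coefficient computation showing the Lommel equation
`y'' + y'/x + (1 − α²/x²) y = x^(μ−1)` has no Laurent-polynomial solution.) -/
theorem stmt11 {k : Type*} [Field k] [CharZero k]
    (α : k) (hα : ∀ m : ℤ, α ^ 2 ≠ (m : k) ^ 2)
    (a : ℤ →₀ k) (ha : a ≠ 0) :
    ∃ j₁ j₂ : ℤ, j₁ ≠ j₂ ∧
      ((j₁ : k) ^ 2 - α ^ 2) * a j₁ + a (j₁ - 2) ≠ 0 ∧
      ((j₂ : k) ^ 2 - α ^ 2) * a j₂ + a (j₂ - 2) ≠ 0 := by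
  obtain ⟨m, hm⟩ := exists_isLeast_support ha
  exact stmt11_general hm (hα m)
end

section
/- Let R be a commutative ring and let d₁, d₂ : R → R be derivations that commute: d₁(d₂(x)) = d₂(d₁(x)) for all x ∈ R. For a square matrix M over R write dᵢ(M) for the entrywise application of dᵢ. Suppose U is an invertible n×n matrix over R and A, B are n×n matrices over R satisfying d₁(U) = A·U and d₂(U) = B·U. Then d₁(B) − d₂(A) = A·B − B·A. -/
/-!
The matrix `d₁(B) − d₂(A) − (A·B − B·A)` is, up to sign, the curvature of the connection given by
`d₁ − A` and `d₂ − B`. Multiplied by a joint solution `U` of the two systems, it becomes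
`[d₁, d₂](U)`; if this vanishes and `U` can be cancelled, the curvature vanishes.
-/

section Leibniz

variable {k R l m n : Type*} [CommSemiring k] [CommSemiring R] [Algebra k R] [Fintype m]

theorem matrix_map_derivation_mul (d : Derivation k R R) (M : Matrix l m R) (N : Matrix m n R) :
    (M * N).map ⇑d = M.map ⇑d * N + M * N.map ⇑d := by
  ext i j
  simp only [Matrix.map_apply, Matrix.mul_apply, Matrix.add_apply, map_sum, Derivation.leibniz,
    smul_eq_mul, ← Finset.sum_add_distrib]
  exact Finset.sum_congr rfl fun _ _ => by ring

theorem matrix_map_map_derivation_of_map_eq_mul (d₁ d₂ : Derivation k R R)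
    {U : Matrix m n R} {A B : Matrix m m R}
    (h₁ : U.map ⇑d₁ = A * U) (h₂ : U.map ⇑d₂ = B * U) :
    (U.map ⇑d₂).map ⇑d₁ = (B.map ⇑d₁ + B * A) * U := by
  rw [h₂, matrix_map_derivation_mul, h₁, Matrix.add_mul, Matrix.mul_assoc]

end Leibniz

section Curvature

variable {k R m n : Type*} [CommRing k] [CommRing R] [Algebra k R]

theorem matrix_map_derivation_lie (d₁ d₂ : Derivation k R R) (U : Matrix m n R) :
    U.map ⇑⁅d₁, d₂⁆ = (U.map ⇑d₂).map ⇑d₁ - (U.map ⇑d₁).map ⇑d₂ := by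
  ext i j
  exact Derivation.commutator_apply (U i j)

variable [Fintype m]

theorem curvature_mul_eq_map_lie (d₁ d₂ : Derivation k R R)
    {U : Matrix m n R} {A B : Matrix m m R}
    (h₁ : U.map ⇑d₁ = A * U) (h₂ : U.map ⇑d₂ = B * U) :
    (B.map ⇑d₁ - A.map ⇑d₂ - (A * B - B * A)) * U = U.map ⇑⁅d₁, d₂⁆ := by
  rw [matrix_map_derivation_lie, matrix_map_map_derivation_of_map_eq_mul d₁ d₂ h₁ h₂,
    matrix_map_map_derivation_of_map_eq_mul d₂ d₁ h₂ h₁, ← Matrix.sub_mul]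
  congr 1
  abel

theorem stmt12_general (d₁ d₂ : Derivation k R R) {U : Matrix m n R} {A B : Matrix m m R}
    (hcomm : U.map ⇑⁅d₁, d₂⁆ = 0) (hU : Function.Injective fun M : Matrix m m R => M * U)
    (h₁ : U.map ⇑d₁ = A * U) (h₂ : U.map ⇑d₂ = B * U) :
    B.map ⇑d₁ - A.map ⇑d₂ = A * B - B * A := by
  have hcurv : (B.map ⇑d₁ - A.map ⇑d₂ - (A * B - B * A)) * U = 0 :=
    (curvature_mul_eq_map_lie d₁ d₂ h₁ h₂).trans hcomm
  exact sub_eq_zero.mp (hU (hcurv.trans (Matrix.zero_mul U).symm))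

end Curvature

/-- If `d₁, d₂` are commuting derivations of a commutative ring `R` and `U` is an invertible
matrix with `d₁(U) = A·U` and `d₂(U) = B·U`, then the integrability condition
`d₁(B) − d₂(A) = A·B − B·A` holds. -/
theorem stmt12 {R : Type*} [CommRing R]
    (d₁ d₂ : Derivation ℤ R R) (hcomm : ∀ x : R, d₁ (d₂ x) = d₂ (d₁ x))
    {n : ℕ} (U A B : Matrix (Fin n) (Fin n) R) (hU : IsUnit U)
    (h₁ : U.map ⇑d₁ = A * U) (h₂ : U.map ⇑d₂ = B * U) :
    B.map ⇑d₁ - A.map ⇑d₂ = A * B - B * A := by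
  have hlie : U.map ⇑⁅d₁, d₂⁆ = 0 := Matrix.ext fun i j => sub_eq_zero.mpr (hcomm (U i j))
  exact stmt12_general d₁ d₂ hlie hU.isRegular.right h₁ h₂
end
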